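/- Let H be an infinite dimensional Hilbert space. For every 0 < ε ≤ 1/2 there exist bounded operators D, X ∈ B(H) with ‖[D,X] - 1‖ ≤ ε and ‖D‖·‖X‖ ≤ C·(log(1/ε))⁵ for an absolute constant C. -/

import Mathlib

/-!
A pair of isometries with orthogonal ranges summing to `H`, or more generally a `MatrixFrame`,
identifies `B(H)` with a matrix algebra over itself. Take for `X` the `(m + 1) × (m + 1)` companion
matrix with last column `b`, and for `D` the matrix with `1, …, m` above the diagonal plus a
correction. The commutator is then `1` plus a matrix supported in the last column. Clearing all
entries of that column except the top one is a quadratic equation for `b`. Using the two-isometry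
frame, it becomes a fixed point equation for the averaging operator plus a small perturbation.
Averaging is not a contraction in the sup norm, but for the concave weights `√(3(m+1)² - i²)` it
contracts by a factor `1 - c/m²`, so the equation has a solution with `‖b i‖ = O(m⁻²)`.
Conjugating by `diag(1, 2, …, 2^m)` divides the remaining top right entry by `2^m`, leaving a defect
`O(m³ 2⁻ᵐ)` while `‖D‖ ‖X‖ = O(m⁵)`; then `m` is chosen proportional to `log (1/ε)`.
-/

open Filter Finset Topology

theorem norm_le_one_of_mul_star_mul_self {A : Type*} [NonUnitalNormedRing A] [StarRing A]
    [CStarRing A] {x : A} (hx : x * star x * x = x) : ‖x‖ ≤ 1 := by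
  have h_proj : IsStarProjection (star x * x) :=
    ⟨by rw [IsIdempotentElem, mul_assoc, ← mul_assoc x, hx], .star_mul_self x⟩
  have h_sq : ‖x‖ * ‖x‖ ≤ 1 := CStarRing.norm_star_mul_self (x := x) ▸ h_proj.norm_le
  nlinarith

section Bracket

variable {A : Type*} [NonUnitalNormedRing A]

theorem norm_lie_le_of_le {x y : A} {p q : ℝ} (hx : ‖x‖ ≤ p) (hy : ‖y‖ ≤ q) :
    ‖⁅x, y⁆‖ ≤ 2 * p * q := by
  calc ‖x * y - y * x‖ ≤ p * q + q * p :=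
        norm_sub_le_of_le (norm_mul_le_of_le hx hy) (norm_mul_le_of_le hy hx)
    _ = 2 * p * q := by ring

theorem norm_mul_lie_sub_mul_lie_le {u x y x' y' : A} {L β δ : ℝ} (hu : ‖u‖ ≤ L) (hy : ‖y‖ ≤ β)
    (hx' : ‖x'‖ ≤ β) (hx : ‖x - x'‖ ≤ δ) (hyy' : ‖y - y'‖ ≤ δ) :
    ‖x * ⁅u, y⁆ - x' * ⁅u, y'⁆‖ ≤ 4 * L * β * δ := by
  have h_split : x * ⁅u, y⁆ - x' * ⁅u, y'⁆ = (x - x') * ⁅u, y⁆ + x' * ⁅u, y - y'⁆ := by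
    simp only [Ring.lie_def, sub_mul, mul_sub]; abel
  calc ‖x * ⁅u, y⁆ - x' * ⁅u, y'⁆‖ ≤ δ * (2 * L * β) + β * (2 * L * δ) :=
        h_split ▸ norm_add_le_of_le (norm_mul_le_of_le hx (norm_lie_le_of_le hu hy))
          (norm_mul_le_of_le hx' (norm_lie_le_of_le hu hyy'))
    _ = 4 * L * β * δ := by ring

theorem norm_add_lie_add_mul_lie_le {u v x y z : A} {L β : ℝ} (hu : ‖u‖ ≤ L) (hv : ‖v‖ ≤ L)
    (hx : ‖x‖ ≤ β) (hy : ‖y‖ ≤ β) (hz : ‖z‖ ≤ β) :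
    ‖x + ⁅v, y⁆ + y * ⁅u, z⁆‖ ≤ β + 2 * L * β + β * (2 * L * β) :=
  norm_add_le_of_le (norm_add_le_of_le hx (norm_lie_le_of_le hv hy))
    (norm_mul_le_of_le hy (norm_lie_le_of_le hu hz))

end Bracket

section WeightedContraction

theorem exists_tendsto_of_weighted_geometric {ι E : Type*} [NormedAddCommGroup E] [CompleteSpace E]
    {w : ι → ℝ} {C q : ℝ} (hq : q < 1) {x : ℕ → ι → E}
    (hx : ∀ n i, ‖x n i - x (n + 1) i‖ ≤ C * q ^ n * w i) :
    ∃ f : ι → E, (∀ i, Tendsto (x · i) atTop (𝓝 (f i))) ∧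
      ∀ n i, ‖x n i - f i‖ ≤ C * q ^ n / (1 - q) * w i := by
  have h_geometric (i : ι) (n : ℕ) : dist (x n i) (x (n + 1) i) ≤ C * w i * q ^ n := by
    rw [dist_eq_norm]
    exact (hx n i).trans_eq (by ring)
  choose f hf using fun i ↦ cauchySeq_tendsto_of_complete
    (cauchySeq_of_le_geometric q (C * w i) hq (h_geometric i))
  refine ⟨f, hf, fun n i ↦ ?_⟩
  rw [← dist_eq_norm]
  exact (dist_le_of_le_geometric_of_tendsto q (C * w i) hq (h_geometric i) (hf i) n).trans_eq
    (by ring)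

theorem exists_isFixedPt_of_weighted_contraction {ι E : Type*} [NormedAddCommGroup E]
    [CompleteSpace E] {w : ι → ℝ} {R q : ℝ} {Φ : (ι → E) → ι → E} (hw : ∀ i, 0 ≤ w i)
    (hR : 0 ≤ R) (hq₀ : 0 ≤ q) (hq₁ : q < 1)
    (hlip : ∀ f g : ι → E, (∀ i, ‖f i‖ ≤ R * w i) → (∀ i, ‖g i‖ ≤ R * w i) →
      ∀ d : ℝ, 0 ≤ d → (∀ i, ‖f i - g i‖ ≤ d * w i) → ∀ i, ‖Φ f i - Φ g i‖ ≤ q * (d * w i))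
    (hzero : ∀ i, ‖Φ 0 i‖ ≤ (1 - q) * R * w i) :
    ∃ f : ι → E, (∀ i, ‖f i‖ ≤ R * w i) ∧ Φ.IsFixedPt f := by
  have h_zero_mem (i : ι) : ‖(0 : ι → E) i‖ ≤ R * w i := by simpa using mul_nonneg hR (hw i)
  have h_maps (f : ι → E) (hf : ∀ i, ‖f i‖ ≤ R * w i) (i : ι) : ‖Φ f i‖ ≤ R * w i := by
    calc ‖Φ f i‖ ≤ ‖Φ 0 i‖ + ‖Φ f i - Φ 0 i‖ := norm_le_norm_add_norm_sub' _ _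
      _ ≤ (1 - q) * R * w i + q * (R * w i) :=
        add_le_add (hzero i) (hlip f 0 hf h_zero_mem R hR (by simpa using hf) i)
      _ = R * w i := by ring
  let x (n : ℕ) : ι → E := Φ^[n] 0
  have h_succ (n : ℕ) : x (n + 1) = Φ (x n) := Function.iterate_succ_apply' Φ n 0
  have h_mem (n : ℕ) : ∀ i, ‖x n i‖ ≤ R * w i := by
    induction n with
    | zero => exact h_zero_mem
    | succ n ih => rw [h_succ]; exact h_maps _ ih
  have h_step (n : ℕ) : ∀ i, ‖x n i - x (n + 1) i‖ ≤ R * q ^ n * w i := by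
    induction n with
    | zero => simpa [x] using h_maps 0 h_zero_mem
    | succ n ih =>
      intro i
      rw [h_succ, h_succ (n + 1)]
      exact (hlip _ _ (h_mem n) (h_mem (n + 1)) _ (by positivity) ih i).trans_eq (by ring)
  obtain ⟨f, h_lim, h_close⟩ := exists_tendsto_of_weighted_geometric hq₁ h_step
  have h_f_mem (i : ι) : ‖f i‖ ≤ R * w i :=
    le_of_tendsto (h_lim i).norm (.of_forall fun n ↦ h_mem n i)
  have h_Φ (i : ι) (n : ℕ) : ‖x (n + 1) i - Φ f i‖ ≤ q * (R * q ^ n / (1 - q) * w i) :=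
    h_succ n ▸ hlip _ _ (h_mem n) h_f_mem _
      (div_nonneg (by positivity) (sub_nonneg.2 hq₁.le)) (h_close n) i
  have h_bound (i : ι) : Tendsto (fun n ↦ q * (R * q ^ n / (1 - q) * w i)) atTop (𝓝 0) := by
    simpa using ((((tendsto_pow_atTop_nhds_zero_of_lt_one hq₀ hq₁).const_mul R).div_const
      (1 - q)).mul_const (w i)).const_mul q
  exact ⟨f, h_f_mem, funext fun i ↦ tendsto_nhds_unique (tendsto_iff_norm_sub_tendsto_zero.2 <|
    squeeze_zero (fun _ ↦ norm_nonneg _) (h_Φ i) (h_bound i))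
    ((tendsto_add_atTop_iff_nat 1).2 (h_lim i))⟩

end WeightedContraction

section HilbertBasis

variable {𝕜 H K ι : Type*} [RCLike 𝕜] [NormedAddCommGroup H] [InnerProductSpace 𝕜 H]

theorem clm_ext_hilbertBasis [NormedAddCommGroup K] [NormedSpace 𝕜 K] (b : HilbertBasis ι 𝕜 H)
    {P Q : H →L[𝕜] K} (h : ∀ i, P (b i) = Q (b i)) : P = Q :=
  ContinuousLinearMap.ext_on (Submodule.dense_iff_topologicalClosure_eq_top.2 b.dense_span) <| by
    rintro _ ⟨i, rfl⟩
    exact h i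

theorem clm_ext_inner_hilbertBasis (b : HilbertBasis ι 𝕜 H) {P Q : H →L[𝕜] H}
    (h : ∀ i j, inner 𝕜 (b i) (P (b j)) = inner 𝕜 (b i) (Q (b j))) : P = Q :=
  clm_ext_hilbertBasis b fun j ↦ b.repr.injective <| lp.ext <| funext fun i ↦ by
    simpa only [b.repr_apply_apply] using h i j

theorem exists_linearIsometry_apply_hilbertBasis [NormedAddCommGroup K] [InnerProductSpace 𝕜 K]
    [CompleteSpace K] (b : HilbertBasis ι 𝕜 H) {v : ι → K} (hv : Orthonormal 𝕜 v) :
    ∃ L : H →ₗᵢ[𝕜] K, ∀ i, L (b i) = v i := by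
  classical
  refine ⟨hv.orthogonalFamily.linearIsometry.comp b.repr.toLinearIsometry, fun i ↦ ?_⟩
  calc hv.orthogonalFamily.linearIsometry (b.repr (b i)) = (1 : 𝕜) • v i := by
        rw [b.repr_self, OrthogonalFamily.linearIsometry_apply_single]; rfl
    _ = v i := one_smul 𝕜 _

theorem infinite_of_hilbertBasis (b : HilbertBasis ι 𝕜 H) (hH : ¬ FiniteDimensional 𝕜 H) :
    Infinite ι := by
  by_contra h_finite
  have := not_infinite_iff_finite.1 h_finite
  have := Fintype.ofFinite ι
  exact hH b.toOrthonormalBasis.toBasis.finiteDimensional_of_finite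

end HilbertBasis

theorem nonempty_prod_equiv_self (α β : Type*) [Finite α] [Nonempty α] [Infinite β] :
    Nonempty (α × β ≃ β) := by
  rw [← Cardinal.lift_mk_eq', Cardinal.mk_prod, Cardinal.lift_mul, Cardinal.lift_lift,
    Cardinal.lift_lift]
  refine Cardinal.mul_eq_right ?_ ?_ ?_
  · exact Cardinal.aleph0_le_lift.2 (Cardinal.aleph0_le_mk β)
  · exact (Cardinal.lift_lt_aleph0.2 Cardinal.mk_lt_aleph0).le.trans
      (Cardinal.aleph0_le_lift.2 (Cardinal.aleph0_le_mk β))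
  · exact Cardinal.lift_eq_zero.not.2 (Cardinal.mk_ne_zero α)

/-- A row vector `col` over `A` together with its inverse column vector `row`. It identifies `A`
with the algebra of `ι × ι` matrices over `A`, with `col i * x * row j` corresponding to the matrix
that has the single entry `x` at `(i, j)`. -/
structure MatrixFrame (ι A : Type*) [Fintype ι] [DecidableEq ι] [Ring A] where
  col : ι → A
  row : ι → A
  row_mul_col (i j : ι) : row i * col j = if i = j then 1 else 0
  sum_col_mul_row : ∑ i, col i * row i = 1

namespace MatrixFrame

section Ring

variable {ι A : Type*} [Fintype ι] [DecidableEq ι] [Ring A]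

/-- The element of `A` corresponding to the matrix with entry `x` in position `(i, j)` and zeros
elsewhere. -/
def unit (e : MatrixFrame ι A) (i j : ι) : A →+ A :=
  (AddMonoidHom.mulRight (e.row j)).comp (AddMonoidHom.mulLeft (e.col i))

theorem unit_apply (e : MatrixFrame ι A) (i j : ι) (x : A) :
    e.unit i j x = e.col i * x * e.row j := rfl

theorem unit_mul_unit (e : MatrixFrame ι A) (i j k l : ι) (x y : A) :
    e.unit i j x * e.unit k l y = if j = k then e.unit i l (x * y) else 0 := by
  calc e.col i * x * e.row j * (e.col k * y * e.row l)
      = e.col i * x * (e.row j * e.col k) * (y * e.row l) := by simp only [mul_assoc]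
    _ = if j = k then e.col i * (x * y) * e.row l else 0 := by
      rw [e.row_mul_col]; split_ifs <;> simp [mul_assoc]

/-- The element of `A` corresponding to the diagonal matrix with all diagonal entries `x`. -/
def amplify (e : MatrixFrame ι A) (x : A) : A := ∑ i, e.unit i i x

theorem amplify_one (e : MatrixFrame ι A) : e.amplify 1 = 1 := by
  simp only [amplify, unit_apply, mul_one, e.sum_col_mul_row]

theorem amplify_mul_unit (e : MatrixFrame ι A) (x : A) (i j : ι) (y : A) :
    e.amplify x * e.unit i j y = e.unit i j (x * y) := by
  simp [amplify, sum_mul, unit_mul_unit]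

theorem unit_mul_amplify (e : MatrixFrame ι A) (x : A) (i j : ι) (y : A) :
    e.unit i j y * e.amplify x = e.unit i j (y * x) := by
  simp [amplify, mul_sum, unit_mul_unit]

end Ring

section Shift

attribute [local instance] LieRing.ofAssociativeRing

variable {A : Type*} [Ring A] {m : ℕ} (e : MatrixFrame (Fin (m + 1)) A)

/-- The element of `A` corresponding to the matrix with ones below the diagonal. -/
def shift : A := ∑ i : Fin m, e.unit i.succ i.castSucc 1

/-- The element of `A` corresponding to the matrix with entries `1, …, m` above the diagonal. -/
def lowering : A := ∑ i : Fin m, e.unit i.castSucc i.succ (((i : ℕ) + 1) • 1)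

/-- The element of `A` corresponding to the matrix with last column `b 0, …, b m` and zeros
elsewhere. -/
def lastColumn : (ℕ → A) →+ A :=
  ∑ i : Fin (m + 1), (e.unit i (Fin.last m)).comp (Pi.evalAddMonoidHom (fun _ ↦ A) (i : ℕ))

theorem lastColumn_apply (b : ℕ → A) :
    e.lastColumn b = ∑ i : Fin (m + 1), e.unit i (Fin.last m) (b i) := by
  simp [lastColumn]

theorem lastColumn_single_last (x : A) :
    e.lastColumn (Pi.single m x) = e.unit (Fin.last m) (Fin.last m) x := by
  rw [lastColumn_apply, sum_eq_single (Fin.last m)]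
  · simp
  · intro i _ hi
    rw [Pi.single_eq_of_ne (fun h ↦ hi (Fin.ext (by simpa using h))), map_zero]
  · simp

theorem lastColumn_eq_unit_zero {y : ℕ → A} (hy : ∀ i, 1 ≤ i → i ≤ m → y i = 0) :
    e.lastColumn y = e.unit 0 (Fin.last m) (y 0) := by
  rw [lastColumn_apply, sum_eq_single 0]
  · simp
  · intro i _ hi
    rw [hy i (Nat.one_le_iff_ne_zero.2 (Fin.val_ne_zero_iff.2 hi)) i.is_le, map_zero]
  · simp

theorem lowering_mul_shift :
    e.lowering * e.shift = ∑ i : Fin m, e.unit i.castSucc i.castSucc (((i : ℕ) + 1) • 1) := by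
  simp only [lowering, shift, sum_mul_sum, unit_mul_unit, Fin.succ_inj, mul_one,
    sum_ite_eq, mem_univ, if_true]

theorem shift_mul_lowering :
    e.shift * e.lowering = ∑ i : Fin m, e.unit i.succ i.succ (((i : ℕ) + 1) • 1) := by
  simp only [lowering, shift, sum_mul_sum, unit_mul_unit, Fin.castSucc_inj, one_mul,
    sum_ite_eq, mem_univ, if_true]

theorem lowering_lie_shift :
    ⁅e.lowering, e.shift⁆ = 1 - e.lastColumn (Pi.single m ((m + 1) • 1)) := by
  have h_lowering_shift := Fin.sum_univ_castSucc
    fun i : Fin (m + 1) ↦ e.unit i i (((i : ℕ) + 1) • 1)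
  have h_shift_lowering := Fin.sum_univ_succ fun i : Fin (m + 1) ↦ e.unit i i ((i : ℕ) • 1)
  have h_one : ∑ i : Fin (m + 1), e.unit i i (((i : ℕ) + 1) • 1)
      = ∑ i : Fin (m + 1), e.unit i i ((i : ℕ) • 1) + 1 := by
    simp only [succ_nsmul, map_add, sum_add_distrib]
    exact congrArg (_ + ·) e.amplify_one
  simp only [Fin.val_castSucc, Fin.val_last, Fin.val_zero, zero_smul, map_zero, zero_add,
    Fin.val_succ] at h_lowering_shift h_shift_lowering
  rw [Ring.lie_def, lowering_mul_shift, shift_mul_lowering, lastColumn_single_last,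
    ← h_shift_lowering, eq_sub_iff_add_eq, sub_add_eq_add_sub, ← h_lowering_shift, h_one,
    add_sub_cancel_left]

theorem lowering_lie_lastColumn {b : ℕ → A} (hb : b (m + 1) = 0) :
    ⁅e.lowering, e.lastColumn b⁆ = e.lastColumn fun i ↦ (i + 1) • b (i + 1) := by
  have h_zero : e.lastColumn b * e.lowering = 0 := by
    simp only [lowering, lastColumn_apply, sum_mul_sum, unit_mul_unit,
      (Fin.castSucc_ne_last _).symm, if_false, sum_const_zero]
  rw [Ring.lie_def, h_zero, sub_zero, lastColumn_apply, lastColumn_apply, lowering,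
    Fin.sum_univ_castSucc (fun i : Fin (m + 1) ↦
      e.unit i (Fin.last m) (((i : ℕ) + 1) • b ((i : ℕ) + 1)))]
  simp only [sum_mul_sum, unit_mul_unit, sum_ite_eq, mem_univ, if_true, Fin.val_succ,
    smul_one_mul, Fin.val_castSucc, Fin.val_last, hb, smul_zero, map_zero, add_zero]

theorem amplify_lie_shift (x : A) : ⁅e.amplify x, e.shift⁆ = 0 := by
  simp [Ring.lie_def, shift, mul_sum, sum_mul, amplify_mul_unit, unit_mul_amplify]

theorem amplify_lie_lastColumn (x : A) (b : ℕ → A) :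
    ⁅e.amplify x, e.lastColumn b⁆ = e.lastColumn fun i ↦ ⁅x, b i⁆ := by
  simp [Ring.lie_def, lastColumn_apply, mul_sum, sum_mul, amplify_mul_unit, unit_mul_amplify]

theorem shift_mul_lastColumn (y : ℕ → A) :
    e.shift * e.lastColumn y = e.lastColumn fun i ↦ if i = 0 then 0 else y (i - 1) := by
  rw [lastColumn_apply, lastColumn_apply, shift,
    Fin.sum_univ_succ (fun i : Fin (m + 1) ↦ e.unit i (Fin.last m) (if (i : ℕ) = 0 then _ else _))]
  simp [sum_mul_sum, unit_mul_unit]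

theorem lastColumn_mul_lastColumn (b y : ℕ → A) :
    e.lastColumn b * e.lastColumn y = e.lastColumn fun i ↦ b i * y m := by
  simp [lastColumn_apply, sum_mul_sum, unit_mul_unit]

/-- The companion-type matrix `X` with ones below the diagonal and last column `b`. -/
def companion (b : ℕ → A) : A := e.shift + e.lastColumn b

/-- The matrix `D` paired with `X = companion b`; `u` and `v` are the coefficients in the equations
for `b`, see `coCompanion_lie_companion_sub_one`. -/
def coCompanion (u v : A) (b : ℕ → A) : A :=
  e.lowering + e.amplify v + e.companion b * e.amplify u

theorem coCompanion_lie_companion (u v : A) {b : ℕ → A} (hb : b (m + 1) = 0) :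
    ⁅e.coCompanion u v b, e.companion b⁆ = 1 + e.lastColumn fun i ↦
      (i + 1) • b (i + 1) + ⁅v, b i⁆ + (if i = 0 then 0 else ⁅u, b (i - 1)⁆) + b i * ⁅u, b m⁆
        - Pi.single (M := fun _ ↦ A) m ((m + 1) • 1) i := by
  have h_leibniz : ⁅e.companion b * e.amplify u, e.companion b⁆
      = e.companion b * ⁅e.amplify u, e.companion b⁆ := by
    simp only [Ring.lie_def]; noncomm_ring
  have h_amplify (x : A) : ⁅e.amplify x, e.companion b⁆ = e.lastColumn fun i ↦ ⁅x, b i⁆ := by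
    rw [companion, lie_add, amplify_lie_shift, zero_add, amplify_lie_lastColumn]
  have h_sum : (fun i ↦ (i + 1) • b (i + 1) + ⁅v, b i⁆ + (if i = 0 then 0 else ⁅u, b (i - 1)⁆)
      + b i * ⁅u, b m⁆ - Pi.single (M := fun _ ↦ A) m ((m + 1) • 1) i)
      = (fun i ↦ (i + 1) • b (i + 1)) + (fun i ↦ ⁅v, b i⁆)
        + (fun i ↦ if i = 0 then 0 else ⁅u, b (i - 1)⁆) + (fun i ↦ b i * ⁅u, b m⁆)
        - Pi.single m ((m + 1) • 1) := rfl
  rw [coCompanion, add_lie, add_lie, h_leibniz, h_amplify, h_amplify, h_sum, map_sub, map_add,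
    map_add, map_add, companion, lie_add, lowering_lie_shift, lowering_lie_lastColumn e hb,
    add_mul, shift_mul_lastColumn, lastColumn_mul_lastColumn]
  abel

theorem coCompanion_lie_companion_sub_one (u v : A) {b : ℕ → A} (hm : m ≠ 0) (hb : b (m + 1) = 0)
    (h : ∀ i, 1 ≤ i → i ≤ m → (i + 1) • b (i + 1) + ⁅v, b i⁆ + ⁅u, b (i - 1)⁆ + b i * ⁅u, b m⁆
      = if i = m then (m + 1) • 1 else 0) :
    ⁅e.coCompanion u v b, e.companion b⁆ - 1
      = e.unit 0 (Fin.last m) (b 1 + ⁅v, b 0⁆ + b 0 * ⁅u, b m⁆) := by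
  rw [e.coCompanion_lie_companion u v hb, add_sub_cancel_left, lastColumn_eq_unit_zero]
  · simp [hm.symm]
  · intro i hi him
    rw [if_neg (by lia), h i hi him, Pi.single_apply, sub_self]

end Shift

section Pair

variable {𝕜 A : Type*} [Field 𝕜] [Ring A] [Algebra 𝕜 A]

/-- The entries of the last column `b` in terms of a new unknown `f`, chosen so that the commutators
of `b` with the rows of the frame reproduce `f` up to averaging, see `row_lie_coeff`. -/
def coeff (e : MatrixFrame (Fin 2) A) (l : 𝕜) (f : ℕ → A) (i : ℕ) : A :=
  (2 * l)⁻¹ • (e.col 0 * f i + e.col 1 * f (i + 1))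

theorem coeff_sub (e : MatrixFrame (Fin 2) A) (l : 𝕜) (f g : ℕ → A) :
    e.coeff l (f - g) = e.coeff l f - e.coeff l g := by
  ext i
  simp only [coeff, Pi.sub_apply, mul_sub]
  module

variable (𝕜) in
/-- Half the `2 × 2` matrix with entries `f i` on the diagonal and `f (i - 1)`, `f (i + 1)` off it.
It is only meaningful for `1 ≤ i`, the subtraction being truncated. -/
def average (e : MatrixFrame (Fin 2) A) (f : ℕ → A) (i : ℕ) : A :=
  (2 : 𝕜)⁻¹ • ∑ j : Fin 2, ∑ k : Fin 2, e.unit j k (f (i + j - k))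

theorem average_sub (e : MatrixFrame (Fin 2) A) (f g : ℕ → A) :
    e.average 𝕜 (f - g) = e.average 𝕜 f - e.average 𝕜 g := by
  ext i
  simp only [average, Pi.sub_apply, map_sub, sum_sub_distrib, smul_sub]

theorem row_lie_coeff [NeZero (2 : 𝕜)] (e : MatrixFrame (Fin 2) A) {l : 𝕜} (hl : l ≠ 0)
    (f : ℕ → A) {i : ℕ} (hi : 1 ≤ i) :
    ⁅l • e.row 0, e.coeff l f i⁆ + ⁅l • e.row 1, e.coeff l f (i - 1)⁆ = f i - e.average 𝕜 f i := by
  have h_scalar : l * (2 * l)⁻¹ = 2⁻¹ := by field_simp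
  have h_row_col (j k : Fin 2) (x : A) : e.row j * (e.col k * x) = if j = k then x else 0 := by
    rw [← mul_assoc, e.row_mul_col, ite_mul, one_mul, zero_mul]
  simp only [Ring.lie_def, coeff, average, unit_apply, smul_mul_smul_comm, h_scalar,
    mul_comm (2 * l)⁻¹ l, mul_add, add_mul, h_row_col, Fin.sum_univ_two, Nat.sub_add_cancel hi,
    Fin.val_zero, Fin.val_one, Fin.isValue, zero_ne_one, one_ne_zero, if_true, if_false,
    Nat.add_sub_cancel, add_zero, Nat.sub_zero]
  linear_combination (norm := module) inv_mul_cancel₀ (two_ne_zero' 𝕜) • f i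

end Pair

section Dilate

variable {𝕜 ι A : Type*} [Field 𝕜] [Fintype ι] [DecidableEq ι] [Ring A] [Algebra 𝕜 A]

/-- The frame obtained by conjugating with the diagonal matrix `diag(r)`. -/
def dilate (e : MatrixFrame ι A) {r : ι → 𝕜} (hr : ∀ i, r i ≠ 0) : MatrixFrame ι A where
  col i := r i • e.col i
  row i := (r i)⁻¹ • e.row i
  row_mul_col i j := by
    rw [smul_mul_smul_comm, e.row_mul_col]
    split_ifs with h
    · rw [h, inv_mul_cancel₀ (hr j), one_smul]
    · rw [smul_zero]
  sum_col_mul_row := by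
    simp only [smul_mul_smul_comm, mul_inv_cancel₀ (hr _), one_smul, e.sum_col_mul_row]

theorem dilate_unit (e : MatrixFrame ι A) {r : ι → 𝕜} (hr : ∀ i, r i ≠ 0) (i j : ι) (x : A) :
    (e.dilate hr).unit i j x = (r i / r j) • e.unit i j x := by
  simp only [unit_apply, dilate, smul_mul_assoc, mul_smul_comm, smul_smul, div_eq_mul_inv, mul_comm]

theorem dilate_amplify (e : MatrixFrame ι A) {r : ι → 𝕜} (hr : ∀ i, r i ≠ 0) (x : A) :
    (e.dilate hr).amplify x = e.amplify x := by
  simp only [amplify, dilate_unit, div_self (hr _), one_smul]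

theorem smul_amplify (e : MatrixFrame ι A) (c : 𝕜) (x : A) :
    e.amplify (c • x) = c • e.amplify x := by
  simp only [amplify, unit_apply, mul_smul_comm, smul_mul_assoc, smul_sum]

end Dilate

section Star

/-- The identification with matrices given by `e` respects the involution. For operators on a
Hilbert space this means that the `col i` are isometries with orthogonal ranges summing to `H`. -/
def IsStar {ι A : Type*} [Fintype ι] [DecidableEq ι] [Ring A] [Star A] (e : MatrixFrame ι A) :
    Prop := ∀ i, e.row i = star (e.col i)

theorem IsStar.star_unit {ι A : Type*} [Fintype ι] [DecidableEq ι] [Ring A] [StarRing A]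
    {e : MatrixFrame ι A} (he : e.IsStar) (i j : ι) (x : A) :
    star (e.unit i j x) = e.unit j i (star x) := by
  simp only [unit_apply, he _, star_mul, star_star, mul_assoc]

variable {ι A : Type*} [Fintype ι] [DecidableEq ι] [NormedRing A] [StarRing A] [CStarRing A]
  {e : MatrixFrame ι A}

theorem IsStar.norm_col_le (he : e.IsStar) (i : ι) : ‖e.col i‖ ≤ 1 :=
  norm_le_one_of_mul_star_mul_self <| by
    rw [← he, mul_assoc, e.row_mul_col, if_pos rfl, mul_one]

theorem IsStar.norm_row_le (he : e.IsStar) (i : ι) : ‖e.row i‖ ≤ 1 := by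
  rw [he, norm_star]
  exact he.norm_col_le i

theorem IsStar.norm_smul_row_le {𝕜 : Type*} [NormedField 𝕜] [NormedAlgebra 𝕜 A] (he : e.IsStar)
    (l : 𝕜) (i : ι) : ‖l • e.row i‖ ≤ ‖l‖ := by
  rw [norm_smul]
  exact mul_le_of_le_one_right (norm_nonneg l) (he.norm_row_le i)

theorem IsStar.norm_unit_le (he : e.IsStar) (i j : ι) (x : A) : ‖e.unit i j x‖ ≤ ‖x‖ := by
  calc ‖e.col i * x * e.row j‖ ≤ ‖e.col i‖ * ‖x‖ * ‖e.row j‖ := norm_mul₃_le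
    _ ≤ 1 * ‖x‖ * 1 := by gcongr; exacts [he.norm_col_le i, he.norm_row_le j]
    _ = ‖x‖ := by ring

theorem IsStar.norm_sum_unit_le_one (he : e.IsStar) {κ : Type*} [Fintype κ] {g h : κ → ι}
    (hg : g.Injective) (hh : h.Injective) {x : A} (hx : x * star x * x = x) :
    ‖∑ k, e.unit (g k) (h k) x‖ ≤ 1 := by
  classical
  refine norm_le_one_of_mul_star_mul_self ?_
  simp only [star_sum, he.star_unit, sum_mul_sum, unit_mul_unit, hg.eq_iff, hh.eq_iff,
    sum_ite_eq, mem_univ, if_true, hx]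

theorem IsStar.norm_amplify_row_le {κ : Type*} [Fintype κ] [DecidableEq κ] {e' : MatrixFrame κ A}
    (he : e.IsStar) (he' : e'.IsStar) (j : κ) : ‖e.amplify (e'.row j)‖ ≤ 1 :=
  he.norm_sum_unit_le_one Function.injective_id Function.injective_id <| by
    rw [he' j, star_star, ← he', e'.row_mul_col, if_pos rfl, one_mul]

end Star

section BinaryDilate

variable {𝕜 A : Type*} [RCLike 𝕜] [NormedRing A] [NormedAlgebra 𝕜 A] {m : ℕ}

variable (𝕜) in
/-- Conjugation by `diag(1, 2, …, 2^m)`, which divides the top right entry of a matrix by `2^m` and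
at most doubles the entries just below the diagonal. -/
def binaryDilate (e : MatrixFrame (Fin (m + 1)) A) : MatrixFrame (Fin (m + 1)) A :=
  e.dilate (r := fun i ↦ (2 : 𝕜) ^ (i : ℕ)) fun _ ↦ pow_ne_zero _ two_ne_zero

variable [StarRing A] [CStarRing A] {e : MatrixFrame (Fin (m + 1)) A}

theorem IsStar.norm_binaryDilate_unit_le (he : e.IsStar) (i j : Fin (m + 1)) (x : A) :
    ‖(e.binaryDilate 𝕜).unit i j x‖ ≤ 2 ^ (i : ℕ) / 2 ^ (j : ℕ) * ‖x‖ := by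
  rw [binaryDilate, dilate_unit, norm_smul, norm_div, norm_pow, norm_pow, RCLike.norm_ofNat]
  gcongr
  exact he.norm_unit_le i j x

theorem IsStar.norm_binaryDilate_shift_le (he : e.IsStar) : ‖(e.binaryDilate 𝕜).shift‖ ≤ 2 := by
  have h_shift : (e.binaryDilate 𝕜).shift = (2 : 𝕜) • e.shift := by
    simp only [shift, binaryDilate, dilate_unit, smul_sum, Fin.val_succ, Fin.val_castSucc,
      pow_succ', mul_div_assoc, div_self (pow_ne_zero _ (two_ne_zero' 𝕜)), mul_one]
  have h_norm : ‖e.shift‖ ≤ 1 :=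
    he.norm_sum_unit_le_one (Fin.succ_injective m) (Fin.castSucc_injective m) (by simp)
  rw [h_shift, norm_smul, RCLike.norm_ofNat]
  linarith

theorem IsStar.norm_binaryDilate_lowering_le (he : e.IsStar) :
    ‖(e.binaryDilate 𝕜).lowering‖ ≤ (m + 1) ^ 2 := by
  have h_entry (i : Fin m) : ‖((i : ℕ) + 1) • (1 : A)‖ ≤ m + 1 := by
    calc ‖((i : ℕ) + 1) • (1 : A)‖ ≤ ((i : ℕ) + 1 : ℕ) * ‖(1 : A)‖ := norm_nsmul_le
      _ ≤ (m + 1) * 1 := by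
        gcongr
        · exact_mod_cast Nat.succ_le_succ i.is_lt.le
        · exact norm_le_one_of_mul_star_mul_self (by simp)
      _ = m + 1 := mul_one _
  have h_half (i : ℕ) : (2 : ℝ) ^ i / 2 ^ (i + 1) ≤ 1 :=
    div_le_one_of_le₀ (pow_le_pow_right₀ one_le_two i.le_succ) (by positivity)
  calc ‖(e.binaryDilate 𝕜).lowering‖ ≤ ∑ i : Fin m, 1 * ((m : ℝ) + 1) :=
        norm_sum_le_of_le _ fun i _ ↦ (he.norm_binaryDilate_unit_le _ _ _).trans <|
          mul_le_mul (h_half i) (h_entry i) (norm_nonneg _) zero_le_one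
    _ = m * (m + 1) := by
      simp only [one_mul, sum_const, card_univ, Fintype.card_fin, nsmul_eq_mul]
    _ ≤ (m + 1) ^ 2 := by nlinarith [(m.cast_nonneg : (0 : ℝ) ≤ m)]

theorem IsStar.norm_binaryDilate_lastColumn_le (he : e.IsStar) {b : ℕ → A} {β : ℝ}
    (hb : ∀ i, ‖b i‖ ≤ β) : ‖(e.binaryDilate 𝕜).lastColumn b‖ ≤ (m + 1) * β := by
  have h_entry (i : Fin (m + 1)) : (2 : ℝ) ^ (i : ℕ) / 2 ^ (Fin.last m : ℕ) ≤ 1 :=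
    div_le_one_of_le₀ (pow_le_pow_right₀ one_le_two i.le_last) (by positivity)
  rw [lastColumn_apply]
  calc _ ≤ ∑ i : Fin (m + 1), 1 * β :=
        norm_sum_le_of_le _ fun i _ ↦ (he.norm_binaryDilate_unit_le _ _ _).trans <|
          mul_le_mul (h_entry i) (hb i) (norm_nonneg _) zero_le_one
    _ = (m + 1) * β := by simp

theorem IsStar.norm_binaryDilate_companion_le (he : e.IsStar) {b : ℕ → A} {β : ℝ}
    (hb : ∀ i, ‖b i‖ ≤ β) : ‖(e.binaryDilate 𝕜).companion b‖ ≤ 2 + (m + 1) * β :=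
  norm_add_le_of_le he.norm_binaryDilate_shift_le (he.norm_binaryDilate_lastColumn_le hb)

theorem IsStar.norm_binaryDilate_coCompanion_le (he : e.IsStar) {κ : Type*} [Fintype κ]
    [DecidableEq κ] {e' : MatrixFrame κ A} (he' : e'.IsStar) (j k : κ) (l : 𝕜) {b : ℕ → A} {β : ℝ}
    (hb : ∀ i, ‖b i‖ ≤ β) :
    ‖(e.binaryDilate 𝕜).coCompanion (l • e'.row j) (l • e'.row k) b‖
      ≤ (m + 1) ^ 2 + ‖l‖ + (2 + (m + 1) * β) * ‖l‖ := by
  have h_amplify (j : κ) : ‖(e.binaryDilate 𝕜).amplify (l • e'.row j)‖ ≤ ‖l‖ := by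
    rw [binaryDilate, dilate_amplify, smul_amplify, norm_smul]
    exact mul_le_of_le_one_right (norm_nonneg l) (he.norm_amplify_row_le he' j)
  have h_companion := he.norm_binaryDilate_companion_le (𝕜 := 𝕜) hb
  exact norm_add_le_of_le (norm_add_le_of_le he.norm_binaryDilate_lowering_le (h_amplify k)) <|
    norm_mul_le_of_le h_companion (h_amplify j)

end BinaryDilate

end MatrixFrame

section Weight

theorem sq_add_sq_le_of_concave_weights {n i w u v s t : ℝ} (hn : 1 ≤ n) (hi : |i| ≤ n)
    (hw : w ^ 2 = 3 * n ^ 2 - i ^ 2) (hu : u ^ 2 = 3 * n ^ 2 - (i - 1) ^ 2)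
    (hv : v ^ 2 = 3 * n ^ 2 - (i + 1) ^ 2) (hs : 0 ≤ s) (ht : 0 ≤ t) :
    (w * s + u * t) ^ 2 + (v * s + w * t) ^ 2
      ≤ (2 * (1 - 1 / (24 * n ^ 2)) * w) ^ 2 * (s ^ 2 + t ^ 2) := by
  have h_n : 1 ≤ n ^ 2 := one_le_pow₀ hn
  have h_i : i ^ 2 ≤ n ^ 2 := sq_le_sq' (neg_le_of_abs_le hi) (le_of_abs_le hi)
  have h_offdiag : w * (u + v) ≤ 2 * w ^ 2 - 1 := by
    linarith [two_mul_le_add_sq w u, two_mul_le_add_sq w v]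
  have h_diag : 2 * i * (t ^ 2 - s ^ 2) ≤ (2 * w ^ 2 - 1) * (t - s) ^ 2 + (s ^ 2 + t ^ 2) := by
    have h_amgm := two_mul_le_add_sq (2 * i * (t - s)) (t + s)
    have h_gap : 2 * i ^ 2 * (t - s) ^ 2 ≤ (2 * w ^ 2 - 1) * (t - s) ^ 2 := by
      gcongr; linarith
    nlinarith [sq_nonneg (t - s), sq_nonneg (t + s)]
  have h_gap : 4 * w ^ 2 - 1 ≤ (2 * (1 - 1 / (24 * n ^ 2)) * w) ^ 2 := by
    have h_small : w ^ 2 * (1 / (24 * n ^ 2)) ≤ 1 / 8 := by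
      rw [mul_one_div, div_le_iff₀ (by positivity)]
      linarith [sq_nonneg i]
    linarith [sq_nonneg (w * (1 / (24 * n ^ 2)))]
  calc (w * s + u * t) ^ 2 + (v * s + w * t) ^ 2
      = (w ^ 2 + v ^ 2) * s ^ 2 + (w ^ 2 + u ^ 2) * t ^ 2 + 2 * (w * (u + v)) * (s * t) := by
        ring
    _ ≤ (w ^ 2 + v ^ 2) * s ^ 2 + (w ^ 2 + u ^ 2) * t ^ 2 + 2 * (2 * w ^ 2 - 1) * (s * t) := by
        gcongr
    _ = 2 * (2 * w ^ 2 - 1) * (s ^ 2 + t ^ 2) - (2 * w ^ 2 - 1) * (t - s) ^ 2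
        + 2 * i * (t ^ 2 - s ^ 2) := by rw [hv, hu, hw]; ring
    _ ≤ (4 * w ^ 2 - 1) * (s ^ 2 + t ^ 2) := by linarith
    _ ≤ (2 * (1 - 1 / (24 * n ^ 2)) * w) ^ 2 * (s ^ 2 + t ^ 2) := by gcongr

/-- Concave weights for which averaging contracts with a gap of order `m⁻²`. The constant `3` keeps
all weights with `i ≤ m + 1` comparable to `m + 1`. -/
noncomputable def columnWeight (m i : ℕ) : ℝ := √(3 * (m + 1) ^ 2 - i ^ 2)

theorem columnWeight_nonneg (m i : ℕ) : 0 ≤ columnWeight m i := Real.sqrt_nonneg _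

theorem columnWeight_sq {m i : ℕ} (hi : i ≤ m + 1) :
    columnWeight m i ^ 2 = 3 * (m + 1) ^ 2 - i ^ 2 := by
  have h_cast : (i : ℝ) ≤ m + 1 := by exact_mod_cast hi
  exact Real.sq_sqrt (by nlinarith [(i.cast_nonneg : (0 : ℝ) ≤ i)])

theorem columnWeight_le (m i : ℕ) : columnWeight m i ≤ 2 * (m + 1) :=
  Real.sqrt_le_iff.2 ⟨by positivity, by nlinarith [sq_nonneg (i : ℝ), sq_nonneg (m + 1 : ℝ)]⟩

theorem le_columnWeight {m i : ℕ} (hi : i ≤ m) : m + 1 ≤ columnWeight m i := by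
  have h_cast : (i : ℝ) ≤ m := by exact_mod_cast hi
  exact Real.le_sqrt_of_sq_le (by nlinarith [(i.cast_nonneg : (0 : ℝ) ≤ i)])

end Weight

namespace MatrixFrame

section ColumnMap

variable {𝕜 A : Type*} [Field 𝕜] [Ring A] [Algebra 𝕜 A]

/-- The terms in the equations for `b = coeff l f` that become small for large `l`. -/
def perturbation (e : MatrixFrame (Fin 2) A) (m : ℕ) (l : 𝕜) (f : ℕ → A) (i : ℕ) : A :=
  (i + 1) • e.coeff l f (i + 1) + e.coeff l f i * ⁅l • e.row 1, e.coeff l f m⁆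

/-- The map on `f` whose fixed points give, through `coeff`, solutions of the equations for the last
column `b`. Positions outside `1, …, m` are set to zero. -/
def columnMap (e : MatrixFrame (Fin 2) A) (m : ℕ) (l : 𝕜) (f : ℕ → A) (i : ℕ) : A :=
  if 1 ≤ i ∧ i ≤ m then
    e.average 𝕜 f i - e.perturbation m l f i + if i = m then (m + 1) • 1 else 0
  else 0

theorem coeff_succ_eq_zero_of_isFixedPt {e : MatrixFrame (Fin 2) A} {m : ℕ} {l : 𝕜} {f : ℕ → A}
    (hf : (e.columnMap m l).IsFixedPt f) : e.coeff l f (m + 1) = 0 := by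
  have h_zero (i : ℕ) (hi : m < i) : f i = 0 := by
    rw [← hf, columnMap, if_neg (by lia)]
  simp only [coeff, h_zero (m + 1) (by lia), h_zero (m + 1 + 1) (by lia), mul_zero, add_zero,
    smul_zero]

theorem coeff_equation_of_isFixedPt [NeZero (2 : 𝕜)] {e : MatrixFrame (Fin 2) A} {m : ℕ} {l : 𝕜}
    (hl : l ≠ 0) {f : ℕ → A} (hf : (e.columnMap m l).IsFixedPt f) {i : ℕ} (hi₁ : 1 ≤ i)
    (him : i ≤ m) :
    (i + 1) • e.coeff l f (i + 1) + ⁅l • e.row 0, e.coeff l f i⁆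
        + ⁅l • e.row 1, e.coeff l f (i - 1)⁆ + e.coeff l f i * ⁅l • e.row 1, e.coeff l f m⁆
      = if i = m then (m + 1) • 1 else 0 := by
  have h_fixed : f i = e.average 𝕜 f i - e.perturbation m l f i
      + if i = m then (m + 1) • 1 else 0 := by
    conv_lhs => rw [← hf, columnMap, if_pos ⟨hi₁, him⟩]
  calc _ = (⁅l • e.row 0, e.coeff l f i⁆ + ⁅l • e.row 1, e.coeff l f (i - 1)⁆)
        + e.perturbation m l f i := by rw [perturbation]; abel
    _ = f i - e.average 𝕜 f i + e.perturbation m l f i := by rw [e.row_lie_coeff hl f hi₁]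
    _ = if i = m then (m + 1) • 1 else 0 := by
      conv_lhs => rw [h_fixed]
      abel

end ColumnMap

section ColumnNorm

variable {𝕜 A : Type*} [RCLike 𝕜] [NormedRing A] [NormedAlgebra 𝕜 A] [StarRing A] [CStarRing A]

theorem norm_columnMap_zero_le (e : MatrixFrame (Fin 2) A) (m : ℕ) (l : 𝕜) (i : ℕ) :
    ‖e.columnMap m l 0 i‖ ≤ columnWeight m i := by
  have h_zero : e.average 𝕜 0 i = 0 ∧ e.perturbation m l 0 i = 0 := by
    simp [average, perturbation, coeff]
  rw [columnMap, h_zero.1, h_zero.2, sub_zero, zero_add]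
  split_ifs with hi him
  · calc ‖(m + 1) • (1 : A)‖ ≤ (m + 1 : ℕ) * ‖(1 : A)‖ := norm_nsmul_le
      _ ≤ (m + 1 : ℕ) * 1 := by
        gcongr; exact norm_le_one_of_mul_star_mul_self (by simp)
      _ ≤ columnWeight m i := by simpa using le_columnWeight hi.2
  all_goals simpa using columnWeight_nonneg m i

variable {e : MatrixFrame (Fin 2) A}

theorem IsStar.norm_coeff_le (he : e.IsStar) (l : 𝕜) {m : ℕ} {f : ℕ → A} {d : ℝ} (hd : 0 ≤ d)
    (hf : ∀ i, ‖f i‖ ≤ d * columnWeight m i) (i : ℕ) :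
    ‖e.coeff l f i‖ ≤ 2 * (m + 1) * d / ‖l‖ := by
  have h_col (j : Fin 2) (k : ℕ) : ‖e.col j * f k‖ ≤ 1 * (d * (2 * (m + 1))) :=
    norm_mul_le_of_le (he.norm_col_le j) <|
      (hf k).trans (mul_le_mul_of_nonneg_left (columnWeight_le m k) hd)
  rw [coeff, norm_smul, norm_inv, norm_mul, RCLike.norm_ofNat]
  calc _ ≤ (2 * ‖l‖)⁻¹ * (1 * (d * (2 * (m + 1))) + 1 * (d * (2 * (m + 1)))) := by
        gcongr; exact norm_add_le_of_le (h_col 0 i) (h_col 1 (i + 1))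
    _ = 2 * (m + 1) * d / ‖l‖ := by rw [mul_inv, div_eq_mul_inv]; ring

theorem IsStar.norm_perturbation_sub_le (he : e.IsStar) {m : ℕ} {l : 𝕜}
    (hl : 40000 * (m + 1) ^ 5 ≤ ‖l‖) {f g : ℕ → A}
    (hf : ∀ i, ‖f i‖ ≤ 48 * (m + 1) ^ 2 * columnWeight m i)
    (hg : ∀ i, ‖g i‖ ≤ 48 * (m + 1) ^ 2 * columnWeight m i) {d : ℝ} (hd : 0 ≤ d)
    (hfg : ∀ i, ‖f i - g i‖ ≤ d * columnWeight m i) {i : ℕ} (hi : i ≤ m) :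
    ‖e.perturbation m l f i - e.perturbation m l g i‖
      ≤ 1 / (48 * (m + 1) ^ 2) * (d * columnWeight m i) := by
  have h_coeff_f := he.norm_coeff_le l (by positivity) hf
  have h_coeff_g := he.norm_coeff_le l (by positivity) hg
  have h_coeff_sub (k : ℕ) : ‖e.coeff l f k - e.coeff l g k‖ ≤ 2 * (m + 1) * d / ‖l‖ := by
    rw [← Pi.sub_apply, ← coeff_sub]
    exact he.norm_coeff_le l hd hfg k
  have h_weight := le_columnWeight hi
  set n : ℝ := m + 1 with h_n
  have h_n_one : 1 ≤ n := by simp [h_n]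
  have h_l_pos : 0 < ‖l‖ := lt_of_lt_of_le (by positivity) hl
  have h_linear : ‖(i + 1) • e.coeff l f (i + 1) - (i + 1) • e.coeff l g (i + 1)‖
      ≤ n * (2 * n * d / ‖l‖) := by
    rw [← smul_sub]
    refine norm_nsmul_le.trans (mul_le_mul ?_ (h_coeff_sub _) (norm_nonneg _) (by positivity))
    rw [h_n]
    exact_mod_cast Nat.succ_le_succ hi
  have h_quadratic := norm_mul_lie_sub_mul_lie_le (he.norm_smul_row_le l 1) (h_coeff_f m)
    (h_coeff_g i) (h_coeff_sub i) (h_coeff_sub m)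
  have h_const : (2 * n + 768 * n ^ 3) / ‖l‖ ≤ 1 / (48 * n ^ 2) := by
    have h_pow : n ^ 3 ≤ n ^ 5 := pow_le_pow_right₀ h_n_one (by norm_num)
    rw [div_le_div_iff₀ h_l_pos (by positivity)]
    nlinarith
  rw [perturbation, perturbation, add_sub_add_comm]
  calc _ ≤ n * (2 * n * d / ‖l‖)
          + 4 * ‖l‖ * (2 * n * (48 * n ^ 2) / ‖l‖) * (2 * n * d / ‖l‖) :=
        norm_add_le_of_le h_linear h_quadratic
    _ = (2 * n + 768 * n ^ 3) / ‖l‖ * (d * n) := by field_simp; ring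
    _ ≤ 1 / (48 * n ^ 2) * (d * columnWeight m i) := by gcongr

end ColumnNorm

section Hilbert

variable {𝕜 H ι : Type*} [RCLike 𝕜] [NormedAddCommGroup H] [InnerProductSpace 𝕜 H]
  [CompleteSpace H] [Fintype ι] [DecidableEq ι]

theorem IsStar.norm_sq_eq_sum {e : MatrixFrame ι (H →L[𝕜] H)} (he : e.IsStar) (x : H) :
    ‖x‖ ^ 2 = ∑ i, ‖e.row i x‖ ^ 2 := by
  have h_inner : inner 𝕜 x x = ∑ i, inner 𝕜 (e.row i x) (e.row i x) := by
    calc inner 𝕜 x x = inner 𝕜 ((∑ i, e.col i * e.row i) x) x := by rw [e.sum_col_mul_row]; rfl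
      _ = ∑ i, inner 𝕜 (e.col i (e.row i x)) x := by
        rw [_root_.sum_apply, sum_inner]; rfl
      _ = ∑ i, inner 𝕜 (e.row i x) (e.row i x) := by
        simp only [he _, ContinuousLinearMap.star_eq_adjoint,
          ContinuousLinearMap.adjoint_inner_right]
  simpa only [inner_self_eq_norm_sq_to_K, ← RCLike.ofReal_pow, ← RCLike.ofReal_sum,
    RCLike.ofReal_inj] using h_inner

theorem IsStar.norm_sum_unit_le {e : MatrixFrame ι (H →L[𝕜] H)} (he : e.IsStar)
    {M : ι → ι → H →L[𝕜] H} {p : ι → ι → ℝ} {K : ℝ}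
    (hM : ∀ i j, ‖M i j‖ ≤ p i j) (hK₀ : 0 ≤ K)
    (hK : ∀ t : ι → ℝ, (∀ i, 0 ≤ t i) → ∑ i, (∑ j, p i j * t j) ^ 2 ≤ K ^ 2 * ∑ i, t i ^ 2) :
    ‖∑ i, ∑ j, e.unit i j (M i j)‖ ≤ K := by
  refine ContinuousLinearMap.opNorm_le_bound _ hK₀ fun x ↦ ?_
  have h_row (i : ι) : e.row i ((∑ i, ∑ j, e.unit i j (M i j)) x) = ∑ j, M i j (e.row j x) := by
    have h_mul : e.row i * ∑ i, ∑ j, e.unit i j (M i j) = ∑ j, M i j * e.row j := by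
      simp only [mul_sum, unit_apply, ← mul_assoc, e.row_mul_col, ite_mul, one_mul, zero_mul,
        sum_ite_irrel, sum_const_zero, sum_ite_eq, mem_univ, if_true]
    calc _ = (e.row i * ∑ i, ∑ j, e.unit i j (M i j)) x := rfl
      _ = ∑ j, (M i j * e.row j) x := by rw [h_mul, _root_.sum_apply]
  have h_block (i : ι) : ‖∑ j, M i j (e.row j x)‖ ≤ ∑ j, p i j * ‖e.row j x‖ :=
    norm_sum_le_of_le _ fun j _ ↦ (M i j).le_of_opNorm_le (hM i j) _
  refine le_of_sq_le_sq ?_ (by positivity)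
  calc _ = ∑ i, ‖∑ j, M i j (e.row j x)‖ ^ 2 := by
        rw [he.norm_sq_eq_sum]; simp only [h_row]
    _ ≤ ∑ i, (∑ j, p i j * ‖e.row j x‖) ^ 2 := by gcongr with i; exact h_block i
    _ ≤ K ^ 2 * ∑ i, ‖e.row i x‖ ^ 2 := hK _ fun _ ↦ norm_nonneg _
    _ = (K * ‖x‖) ^ 2 := by rw [mul_pow, he.norm_sq_eq_sum]

theorem IsStar.norm_average_le {e : MatrixFrame (Fin 2) (H →L[𝕜] H)} (he : e.IsStar) {m : ℕ}
    {f : ℕ → H →L[𝕜] H} {d : ℝ} (hd : 0 ≤ d) (hf : ∀ i, ‖f i‖ ≤ d * columnWeight m i) {i : ℕ}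
    (hi₁ : 1 ≤ i) (him : i ≤ m) :
    ‖e.average 𝕜 f i‖ ≤ (1 - 1 / (24 * (m + 1) ^ 2)) * (d * columnWeight m i) := by
  have h_factor : (0 : ℝ) ≤ 1 - 1 / (24 * (m + 1) ^ 2) :=
    sub_nonneg.2 <| div_le_one_of_le₀ (by nlinarith [(m.cast_nonneg : (0 : ℝ) ≤ m)]) (by positivity)
  have h_sum : ‖∑ j : Fin 2, ∑ k : Fin 2, e.unit j k (f (i + j - k))‖
      ≤ 2 * (1 - 1 / (24 * (m + 1) ^ 2)) * (d * columnWeight m i) := by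
    refine he.norm_sum_unit_le (fun j k ↦ hf (i + j - k))
      (mul_nonneg (by positivity) (mul_nonneg hd (columnWeight_nonneg m i))) fun t ht ↦ ?_
    have h_bound := sq_add_sq_le_of_concave_weights (n := m + 1) (i := i)
      (u := columnWeight m (i - 1)) (v := columnWeight m (i + 1)) (by simp)
      (by rw [Nat.abs_cast]; exact_mod_cast him.trans m.le_succ)
      (columnWeight_sq (him.trans m.le_succ))
      (by rw [columnWeight_sq (by lia), Nat.cast_sub hi₁, Nat.cast_one])
      (by rw [columnWeight_sq (by lia), Nat.cast_succ]) (ht 0) (ht 1)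
    simp only [Fin.sum_univ_two, Fin.val_zero, Fin.val_one, add_zero, Nat.sub_zero,
      Nat.add_sub_cancel]
    calc _ = d ^ 2 * ((columnWeight m i * t 0 + columnWeight m (i - 1) * t 1) ^ 2
          + (columnWeight m (i + 1) * t 0 + columnWeight m i * t 1) ^ 2) := by ring
      _ ≤ d ^ 2 * _ := mul_le_mul_of_nonneg_left h_bound (sq_nonneg d)
      _ = _ := by ring
  rw [average, norm_smul, norm_inv, RCLike.norm_ofNat, inv_mul_le_iff₀ two_pos, ← mul_assoc]
  exact h_sum

theorem IsStar.exists_isFixedPt_columnMap {e : MatrixFrame (Fin 2) (H →L[𝕜] H)} (he : e.IsStar)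
    {m : ℕ} {l : 𝕜} (hl : 40000 * (m + 1) ^ 5 ≤ ‖l‖) :
    ∃ f : ℕ → H →L[𝕜] H, (∀ i, ‖f i‖ ≤ 48 * (m + 1) ^ 2 * columnWeight m i) ∧
      (e.columnMap m l).IsFixedPt f := by
  have h_gap : 1 / (48 * (m + 1) ^ 2 : ℝ) ≤ 1 :=
    div_le_one_of_le₀ (by nlinarith [(m.cast_nonneg : (0 : ℝ) ≤ m)]) (by positivity)
  refine exists_isFixedPt_of_weighted_contraction (q := 1 - 1 / (48 * (m + 1) ^ 2))
    (columnWeight_nonneg m) (by positivity) (sub_nonneg.2 h_gap) (sub_lt_self _ (by positivity))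
    (fun f g hf hg d hd hfg i ↦ ?_) fun i ↦ ?_
  · rw [columnMap, columnMap]
    by_cases hi : 1 ≤ i ∧ i ≤ m
    · rw [if_pos hi, if_pos hi]
      have h_average := he.norm_average_le hd hfg hi.1 hi.2
      have h_perturbation := he.norm_perturbation_sub_le hl hf hg hd hfg hi.2
      rw [← Pi.sub_def, average_sub, Pi.sub_apply] at h_average
      rw [add_sub_add_right_eq_sub, sub_sub_sub_comm]
      exact (norm_sub_le_of_le h_average h_perturbation).trans_eq (by field_simp; ring)
    · rw [if_neg hi, if_neg hi, sub_self, norm_zero]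
      exact mul_nonneg (sub_nonneg.2 h_gap) (mul_nonneg hd (columnWeight_nonneg m i))
  · refine (norm_columnMap_zero_le e m l i).trans_eq ?_
    field_simp
    ring

theorem IsStar.exists_column {e : MatrixFrame (Fin 2) (H →L[𝕜] H)} (he : e.IsStar) {m : ℕ} {l : 𝕜}
    (hl : 40000 * (m + 1) ^ 5 ≤ ‖l‖) :
    ∃ b : ℕ → H →L[𝕜] H, (∀ i, ‖b i‖ ≤ 96 * (m + 1) ^ 3 / ‖l‖) ∧ b (m + 1) = 0 ∧
      ∀ i, 1 ≤ i → i ≤ m →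
        (i + 1) • b (i + 1) + ⁅l • e.row 0, b i⁆ + ⁅l • e.row 1, b (i - 1)⁆
          + b i * ⁅l • e.row 1, b m⁆ = if i = m then (m + 1) • 1 else 0 := by
  have h_l : l ≠ 0 := norm_pos_iff.1 (lt_of_lt_of_le (by positivity) hl)
  obtain ⟨f, h_le, h_f⟩ := he.exists_isFixedPt_columnMap hl
  exact ⟨e.coeff l f,
    fun i ↦ (he.norm_coeff_le l (by positivity) h_le i).trans_eq (by ring),
    coeff_succ_eq_zero_of_isFixedPt h_f,
    fun _ hi₁ him ↦ coeff_equation_of_isFixedPt h_l h_f hi₁ him⟩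

theorem exists_isStar {κ : Type*} [Fintype κ] [DecidableEq κ] [Nonempty κ]
    (hH : ¬ FiniteDimensional 𝕜 H) : ∃ e : MatrixFrame κ (H →L[𝕜] H), e.IsStar := by
  classical
  obtain ⟨s, b, -⟩ := exists_hilbertBasis 𝕜 H
  have h_infinite : Infinite s := infinite_of_hilbertBasis b hH
  obtain ⟨φ⟩ := nonempty_prod_equiv_self κ s
  have h_orthonormal (i : κ) : Orthonormal 𝕜 fun k ↦ b (φ (i, k)) :=
    b.orthonormal.comp _ (φ.injective.comp (Prod.mk_right_injective i))
  choose S hS using fun i ↦ exists_linearIsometry_apply_hilbertBasis b (h_orthonormal i)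
  let col (i : κ) : H →L[𝕜] H := (S i).toContinuousLinearMap
  have h_row_col (i j : κ) : star (col i) * col j = if i = j then 1 else 0 := by
    refine clm_ext_inner_hilbertBasis b fun k l ↦ ?_
    calc inner 𝕜 (b k) ((star (col i) * col j) (b l)) = inner 𝕜 (S i (b k)) (S j (b l)) :=
          ContinuousLinearMap.adjoint_inner_right (col i) (b k) (col j (b l))
      _ = if (i, k) = (j, l) then 1 else 0 := by
        rw [hS, hS, orthonormal_iff_ite.1 b.orthonormal]; simp only [φ.injective.eq_iff]
      _ = inner 𝕜 (b k) ((if i = j then 1 else 0 : H →L[𝕜] H) (b l)) := by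
        by_cases h : i = j <;> simp [h, orthonormal_iff_ite.1 b.orthonormal k l]
  refine ⟨⟨col, fun i ↦ star (col i), h_row_col, clm_ext_hilbertBasis b fun k ↦ ?_⟩, fun _ ↦ rfl⟩
  obtain ⟨⟨j, l⟩, rfl⟩ := φ.surjective k
  have h_sum : (∑ i, col i * star (col i)) * col j = col j := by
    simp only [sum_mul, mul_assoc, h_row_col, mul_ite, mul_one, mul_zero, sum_ite_eq',
      mem_univ, if_true]
  rw [← hS]
  exact congrArg (· (b l)) h_sum

theorem exists_lie_close_to_one {m : ℕ} (hm : m ≠ 0)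
    {e : MatrixFrame (Fin (m + 1)) (H →L[𝕜] H)} (he : e.IsStar)
    {e₂ : MatrixFrame (Fin 2) (H →L[𝕜] H)} (he₂ : e₂.IsStar) :
    ∃ D X : H →L[𝕜] H, ‖⁅D, X⁆ - 1‖ ≤ 385 * (m + 1) ^ 3 / 2 ^ m ∧
      ‖D‖ * ‖X‖ ≤ 600000 * (m + 1) ^ 5 := by
  let l : 𝕜 := (40000 * (m + 1) ^ 5 : ℕ)
  have h_l : ‖l‖ = 40000 * (m + 1) ^ 5 := by
    rw [RCLike.norm_natCast]; push_cast; ring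
  obtain ⟨b, h_b_le, h_b_zero, h_b⟩ := he₂.exists_column h_l.ge
  set n : ℝ := m + 1 with h_n
  set β := 96 * n ^ 3 / ‖l‖ with h_β
  have h_n_one : 1 ≤ n := by simp [h_n]
  have h_l_pos : 0 < ‖l‖ := by rw [h_l]; positivity
  have h_l_β : ‖l‖ * β = 96 * n ^ 3 := mul_div_cancel₀ _ h_l_pos.ne'
  have h_n_β : n * β ≤ 1 := by
    rw [h_β, h_l, mul_div_assoc', div_le_one (by positivity)]
    linarith [pow_le_pow_right₀ h_n_one (show 4 ≤ 5 by norm_num)]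
  have h_β_one : β ≤ 1 := (le_mul_of_one_le_left (by positivity) h_n_one).trans h_n_β
  have h_n_sq : n ^ 2 ≤ ‖l‖ := by
    linarith [pow_le_pow_right₀ h_n_one (show 2 ≤ 5 by norm_num), sq_nonneg n]
  refine ⟨(e.binaryDilate 𝕜).coCompanion (l • e₂.row 1) (l • e₂.row 0) b,
    (e.binaryDilate 𝕜).companion b, ?_, ?_⟩
  · rw [coCompanion_lie_companion_sub_one _ _ _ hm h_b_zero h_b]
    calc _ ≤ 2 ^ 0 / 2 ^ m * (β + 2 * ‖l‖ * β + β * (2 * ‖l‖ * β)) :=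
          (he.norm_binaryDilate_unit_le 0 (Fin.last m) _).trans <| by
            refine mul_le_mul_of_nonneg_left ?_ (by positivity)
            exact norm_add_lie_add_mul_lie_le (he₂.norm_smul_row_le l 1)
              (he₂.norm_smul_row_le l 0) (h_b_le 1) (h_b_le 0) (h_b_le m)
      _ = (β + 192 * n ^ 3 + β * (192 * n ^ 3)) / 2 ^ m := by rw [mul_assoc 2, h_l_β]; ring
      _ ≤ (n ^ 3 + 192 * n ^ 3 + 1 * (192 * n ^ 3)) / 2 ^ m := by
        gcongr; exact h_β_one.trans (one_le_pow₀ h_n_one)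
      _ = 385 * n ^ 3 / 2 ^ m := by ring
  · calc _ ≤ (n ^ 2 + ‖l‖ + (2 + n * β) * ‖l‖) * (2 + n * β) := by
          gcongr
          · exact he.norm_binaryDilate_coCompanion_le he₂ 1 0 l h_b_le
          · exact he.norm_binaryDilate_companion_le h_b_le
      _ ≤ (‖l‖ + ‖l‖ + (2 + 1) * ‖l‖) * (2 + 1) := by gcongr
      _ = 600000 * n ^ 5 := by rw [h_l]; ring

end Hilbert

end MatrixFrame

theorem exists_nat_cube_div_two_pow_le {ε : ℝ} (hε : 0 < ε) (hε' : ε ≤ 1 / 2) :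
    ∃ m : ℕ, m ≠ 0 ∧ 385 * (m + 1 : ℝ) ^ 3 / 2 ^ m ≤ ε ∧ (m + 1 : ℝ) ≤ 114 * Real.log (1 / ε) := by
  set L := Real.log (1 / ε) with h_L
  have h_two_le : 2 ≤ 1 / ε := by rwa [le_div_iff₀ hε, ← le_div_iff₀' two_pos]
  have h_log_two : 1 / 2 < Real.log 2 := by linarith [Real.log_two_gt_d9]
  have h_L_gt : 1 / 2 < L := h_log_two.trans_le (Real.log_le_log two_pos h_two_le)
  set k := ⌈2 * L⌉₊
  have h_le_k : 2 * L ≤ k := Nat.le_ceil _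
  have h_k_le : k ≤ 2 * L + 1 := (Nat.ceil_lt_add_one (by linarith)).le
  have h_k_ne : k ≠ 0 := (Nat.ceil_pos.2 (by linarith)).ne'
  refine ⟨28 * k, mul_ne_zero (by norm_num) h_k_ne, ?_, by push_cast; linarith⟩
  have h_two_pow : 1 / ε ≤ 2 ^ k := by
    rw [← Real.log_le_log_iff (by positivity) (by positivity), Real.log_pow, ← h_L]
    nlinarith
  have h_linear : 8 * (28 * k + 1 : ℝ) ≤ 2 ^ (9 * k) := by
    have h_one_le : (1 : ℝ) ≤ k := by linarith
    calc 8 * (28 * k + 1 : ℝ) ≤ 1 + k * 511 := by linarith [h_one_le]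
      _ ≤ (1 + 511) ^ k := one_add_mul_le_pow (by norm_num) k
      _ = 2 ^ (9 * k) := by rw [pow_mul]; norm_num
  rw [div_le_iff₀ (by positivity)]
  calc 385 * ((28 * k : ℕ) + 1 : ℝ) ^ 3 ≤ (8 * (28 * k + 1 : ℝ)) ^ 3 := by
        rw [mul_pow]; push_cast; gcongr; norm_num
    _ ≤ (2 ^ (9 * k)) ^ 3 := by gcongr
    _ ≤ ε * 2 ^ k * (2 ^ (9 * k)) ^ 3 := le_mul_of_one_le_left (by positivity) <| by
        rwa [← div_le_iff₀' hε]
    _ = ε * 2 ^ (28 * k) := by ring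

theorem commutators_close_to_identity_general {𝕜 H : Type*} [RCLike 𝕜] [NormedAddCommGroup H]
    [InnerProductSpace 𝕜 H] [CompleteSpace H] (hH : ¬ FiniteDimensional 𝕜 H) {ε : ℝ} (hε : 0 < ε)
    (hε' : ε ≤ 1 / 2) :
    ∃ D X : H →L[𝕜] H, ‖D * X - X * D - 1‖ ≤ ε ∧
      ‖D‖ * ‖X‖ ≤ 600000 * 114 ^ 5 * Real.log (1 / ε) ^ 5 := by
  obtain ⟨m, hm, h_defect, h_m_le⟩ := exists_nat_cube_div_two_pow_le hε hε'
  obtain ⟨e, he⟩ := MatrixFrame.exists_isStar (κ := Fin (m + 1)) hH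
  obtain ⟨e₂, he₂⟩ := MatrixFrame.exists_isStar (κ := Fin 2) hH
  obtain ⟨D, X, h_lie, h_norm⟩ := MatrixFrame.exists_lie_close_to_one hm he he₂
  refine ⟨D, X, h_lie.trans h_defect, ?_⟩
  calc ‖D‖ * ‖X‖ ≤ 600000 * (m + 1) ^ 5 := h_norm
    _ ≤ 600000 * (114 * Real.log (1 / ε)) ^ 5 := by gcongr
    _ = 600000 * 114 ^ 5 * Real.log (1 / ε) ^ 5 := by ring

/-- Main theorem: on an infinite dimensional Hilbert space, for every `0 < ε ≤ 1/2` there exist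
`D, X` with `‖[D,X] - 1‖ ≤ ε` and `‖D‖‖X‖ = O(log⁵(1/ε))`. -/
theorem commutators_close_to_identity : ∃ C : ℝ, 0 < C ∧
    ∀ (H : Type) [NormedAddCommGroup H] [InnerProductSpace ℂ H] [CompleteSpace H],
      ¬ FiniteDimensional ℂ H → ∀ ε : ℝ, 0 < ε → ε ≤ 1 / 2 →
        ∃ D X : H →L[ℂ] H, ‖D * X - X * D - 1‖ ≤ ε ∧
          ‖D‖ * ‖X‖ ≤ C * Real.log (1 / ε) ^ 5 := by
  exact ⟨600000 * 114 ^ 5, by positivity, fun _ _ _ _ hH _ hε hε' ↦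
    commutators_close_to_identity_general hH hε hε'⟩
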